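/- arXiv:1812.07389 — 12 statements merged into one kernel-verified Lean document; each statement's English description precedes it below -/
import Mathlib

section
/- Let H1 and H_LI be independent exponentially distributed random variables with means Ω1 > 0 and Ω_LI > 0. Fix ρ > 0, thresholds γ1 > 0 and γ2 > 0 with a2 > a1·γ2, and set θ1 = max( γ2/(ρ(a2 − a1·γ2)), γ1/(a1·ρ) ). Then the full-duplex outage probability of the near user, P_out = 1 − P( a2·ρ·H1/(a1·ρ·H1 + ρ·H_LI + 1) > γ2 and a1·ρ·H1/(ρ·H_LI + 1) > γ1 ), satisfies P_out = 1 − (Ω1/(Ω1 + ρ·θ1·Ω_LI))·exp(−θ1/Ω1). -/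
open MeasureTheory ProbabilityTheory Real

/-- A law whose survival function is exponential is the exponential measure. -/
lemma eq_expMeasure_of_survival (ν : Measure ℝ) [IsProbabilityMeasure ν] (m : ℝ) (hm : 0 < m)
    (h : ∀ t : ℝ, 0 ≤ t → ν (Set.Ioi t) = ENNReal.ofReal (Real.exp (-(t / m)))) :
    ν = expMeasure m⁻¹ := by
  have hr : 0 < m⁻¹ := inv_pos.mpr hm
  have := isProbabilityMeasure_expMeasure hr
  apply Measure.eq_of_cdf
  ext x
  rw [cdf_expMeasure_eq hr, cdf_eq_real]
  have key : ∀ t : ℝ, 0 ≤ t → ν.real (Set.Iic t) = 1 - Real.exp (-(t / m)) := by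
    intro t ht
    have h1 : ν.real (Set.Ioi t) = Real.exp (-(t / m)) := by
      rw [measureReal_def, h t ht, ENNReal.toReal_ofReal (Real.exp_pos _).le]
    rw [← h1, ← Set.compl_Ioi, probReal_compl_eq_one_sub measurableSet_Ioi]
  split_ifs with hx
  · rw [key x hx]
    congr 3
    ring
  · have h0 := key 0 le_rfl
    have h2 : ν.real (Set.Iic x) ≤ ν.real (Set.Iic 0) :=
      measureReal_mono (Set.Iic_subset_Iic.mpr (not_le.mp hx).le)
    have h3 : 0 ≤ ν.real (Set.Iic x) := measureReal_nonneg
    simp at h0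
    simp [h0] at h2
    linarith

/-- The Laplace-type integral against the exponential law. -/
lemma lintegral_exp_expMeasure (m c d : ℝ) (hm : 0 < m) (hc : 0 < c) :
    ∫⁻ y, ENNReal.ofReal (Real.exp (-(c * y + d))) ∂(expMeasure m⁻¹)
      = ENNReal.ofReal (m⁻¹ / (m⁻¹ + c) * Real.exp (-d)) := by
  have hr : 0 < m⁻¹ := inv_pos.mpr hm
  have hr' : 0 < m⁻¹ + c := by positivity
  have hmeas : Measurable (exponentialPDF m⁻¹) :=
    (measurable_exponentialPDFReal _).ennreal_ofReal
  have e : expMeasure m⁻¹ = volume.withDensity (exponentialPDF m⁻¹) := rfl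
  have hmeas' : Measurable (exponentialPDF (m⁻¹ + c)) :=
    (measurable_exponentialPDFReal _).ennreal_ofReal
  rw [e, lintegral_withDensity_eq_lintegral_mul _ hmeas (by fun_prop)]
  rw [← mul_one (ENNReal.ofReal (m⁻¹ / (m⁻¹ + c) * Real.exp (-d))),
    ← lintegral_exponentialPDF_eq_one hr', ← lintegral_const_mul _ hmeas']
  congr 1
  ext y
  simp only [Pi.mul_apply]
  rcases lt_or_ge y 0 with hy | hy
  · rw [exponentialPDF_of_neg hy, exponentialPDF_of_neg hy]
    simp
  · rw [exponentialPDF_of_nonneg hy, exponentialPDF_of_nonneg hy,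
      ← ENNReal.ofReal_mul (by positivity), ← ENNReal.ofReal_mul (by positivity)]
    congr 1
    have : Real.exp (-(m⁻¹ * y)) * Real.exp (-(c * y + d))
        = Real.exp (-d) * Real.exp (-((m⁻¹ + c) * y)) := by
      rw [← Real.exp_add, ← Real.exp_add]
      congr 1
      ring
    rw [mul_assoc, this]
    have h3 : m⁻¹ / (m⁻¹ + c) * (m⁻¹ + c) = m⁻¹ := div_mul_cancel₀ _ hr'.ne'
    linear_combination (-(Real.exp (-d) * Real.exp (-((m⁻¹ + c) * y)))) * h3

/-- **FD near-user outage probability (Theorem 1).**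
If `H1` and `HLI` are independent exponential random variables with means `Ω1` and `ΩLI`
(characterized by their survival functions), then the full-duplex outage probability of the
near user has the stated closed form. -/
theorem fd_near_user_outage
    {Ω : Type*} [MeasurableSpace Ω] (μ : Measure Ω) [IsProbabilityMeasure μ]
    (H1 HLI : Ω → ℝ) (hH1m : Measurable H1) (hHLIm : Measurable HLI)
    (Ω1 ΩLI : ℝ) (hΩ1 : 0 < Ω1) (hΩLI : 0 < ΩLI)
    (hH1 : ∀ t : ℝ, 0 ≤ t → μ {ω | H1 ω > t} = ENNReal.ofReal (Real.exp (-(t / Ω1))))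
    (hHLI : ∀ t : ℝ, 0 ≤ t → μ {ω | HLI ω > t} = ENNReal.ofReal (Real.exp (-(t / ΩLI))))
    (hIndep : IndepFun H1 HLI μ)
    (ρ γ1 γ2 a1 a2 : ℝ) (hρ : 0 < ρ) (hγ1 : 0 < γ1) (hγ2 : 0 < γ2)
    (ha1 : 0 < a1) (ha : a1 * γ2 < a2)
    (θ1 : ℝ) (hθ1 : θ1 = max (γ2 / (ρ * (a2 - a1 * γ2))) (γ1 / (a1 * ρ))) :
    1 - (μ {ω | a2 * ρ * H1 ω / (a1 * ρ * H1 ω + ρ * HLI ω + 1) > γ2 ∧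
          a1 * ρ * H1 ω / (ρ * HLI ω + 1) > γ1}).toReal
      = 1 - Ω1 / (Ω1 + ρ * θ1 * ΩLI) * Real.exp (-(θ1 / Ω1)) := by
  have hd : 0 < a2 - a1 * γ2 := by linarith
  have hθpos : 0 < θ1 := by
    rw [hθ1]
    exact lt_max_of_lt_right (by positivity)
  have pos_ae : ∀ (X : Ω → ℝ) (m : ℝ), Measurable X →
      (∀ t : ℝ, 0 ≤ t → μ {ω | X ω > t} = ENNReal.ofReal (Real.exp (-(t / m)))) →
      ∀ᵐ ω ∂μ, 0 < X ω := by
    intro X m hX h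
    have h0 := h 0 le_rfl
    simp only [zero_div, neg_zero, Real.exp_zero, ENNReal.ofReal_one] at h0
    exact (prob_compl_eq_zero_iff (measurableSet_lt measurable_const hX)).mpr h0
  have p1 := pos_ae H1 Ω1 hH1m hH1
  have p2 := pos_ae HLI ΩLI hHLIm hHLI
  have hev : μ {ω | a2 * ρ * H1 ω / (a1 * ρ * H1 ω + ρ * HLI ω + 1) > γ2 ∧
          a1 * ρ * H1 ω / (ρ * HLI ω + 1) > γ1}
      = μ {ω | θ1 * (ρ * HLI ω + 1) < H1 ω} := by
    apply measure_congr
    filter_upwards [p1, p2] with ω h1 h2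
    apply propext
    change (_ > _ ∧ _ > _) ↔ θ1 * (ρ * HLI ω + 1) < H1 ω
    have hq : 0 < ρ * HLI ω + 1 := by positivity
    have hq2 : 0 < a1 * ρ * H1 ω + ρ * HLI ω + 1 := by positivity
    rw [gt_iff_lt, gt_iff_lt, lt_div_iff₀ hq2, lt_div_iff₀ hq, ← lt_div_iff₀ (a := θ1) hq, hθ1, max_lt_iff,
      div_lt_div_iff₀ (by positivity) hq, div_lt_div_iff₀ (by positivity) hq]
    constructor <;> rintro ⟨ha, hb⟩ <;> constructor <;> nlinarith
  have hprod := hIndep.map_prod_eq_prod_map_map hH1m.aemeasurable hHLIm.aemeasurable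
  have := Measure.isProbabilityMeasure_map (μ := μ) hH1m.aemeasurable
  have := Measure.isProbabilityMeasure_map (μ := μ) hHLIm.aemeasurable
  have hν2 : μ.map HLI = expMeasure ΩLI⁻¹ := by
    apply eq_expMeasure_of_survival _ _ hΩLI
    intro t ht
    rw [Measure.map_apply hHLIm measurableSet_Ioi]
    exact hHLI t ht
  have hS : MeasurableSet {p : ℝ × ℝ | θ1 * (ρ * p.2 + 1) < p.1} :=
    measurableSet_lt (by fun_prop) (by fun_prop)
  have hcalc : μ {ω | θ1 * (ρ * HLI ω + 1) < H1 ω}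
      = ENNReal.ofReal (ΩLI⁻¹ / (ΩLI⁻¹ + θ1 * ρ / Ω1) * Real.exp (-(θ1 / Ω1))) := by
    have e1 : μ {ω | θ1 * (ρ * HLI ω + 1) < H1 ω}
        = μ.map (fun ω => (H1 ω, HLI ω)) {p : ℝ × ℝ | θ1 * (ρ * p.2 + 1) < p.1} := by
      rw [Measure.map_apply (by fun_prop) hS]
      rfl
    rw [e1, hprod, Measure.prod_apply_symm hS,
      ← lintegral_exp_expMeasure ΩLI (θ1 * ρ / Ω1) (θ1 / Ω1) hΩLI (by positivity), ← hν2]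
    apply lintegral_congr_ae
    have p2' : ∀ᵐ y ∂(μ.map HLI), 0 < y :=
      (ae_map_iff hHLIm.aemeasurable (measurableSet_lt measurable_const measurable_id)).mpr p2
    filter_upwards [p2'] with y hy
    have e2 : (fun x : ℝ => (x, y)) ⁻¹' {p : ℝ × ℝ | θ1 * (ρ * p.2 + 1) < p.1}
        = Set.Ioi (θ1 * (ρ * y + 1)) := rfl
    rw [e2, Measure.map_apply hH1m measurableSet_Ioi]
    refine (hH1 (θ1 * (ρ * y + 1)) (by positivity)).trans ?_
    congr 3
    ring
  rw [hev, hcalc, ENNReal.toReal_ofReal (by positivity)]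
  congr 2
  field_simp
end

section
/- Let H1 be an exponentially distributed random variable with mean Ω1 > 0. Fix ρ > 0, thresholds γ1 > 0 and γ2 > 0 with a2 > a1·γ2, and set θ2 = max( γ2/(ρ(a2 − a1·γ2)), γ1/(a1·ρ) ). Then the half-duplex outage probability of the near user, P_out = 1 − P( a2·ρ·H1/(a1·ρ·H1 + 1) > γ2 and a1·ρ·H1 > γ1 ), satisfies P_out = 1 − exp(−θ2/Ω1). -/
open MeasureTheory ProbabilityTheory Real

/-- **HD near-user outage probability (Corollary 1).**
If `H1` is an exponential random variable with mean `Ω1` (characterized by its survival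
function), then the half-duplex outage probability of the near user has the stated
closed form. -/
theorem hd_near_user_outage
    {Ω : Type*} [MeasurableSpace Ω] (μ : Measure Ω) [IsProbabilityMeasure μ]
    (H1 : Ω → ℝ) (hH1m : Measurable H1)
    (Ω1 : ℝ) (hΩ1 : 0 < Ω1)
    (hH1 : ∀ t : ℝ, 0 ≤ t → μ {ω | H1 ω > t} = ENNReal.ofReal (Real.exp (-(t / Ω1))))
    (ρ γ1 γ2 a1 a2 : ℝ) (hρ : 0 < ρ) (hγ1 : 0 < γ1) (hγ2 : 0 < γ2)
    (ha1 : 0 < a1) (ha : a1 * γ2 < a2)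
    (θ2 : ℝ) (hθ2 : θ2 = max (γ2 / (ρ * (a2 - a1 * γ2))) (γ1 / (a1 * ρ))) :
    1 - (μ {ω | a2 * ρ * H1 ω / (a1 * ρ * H1 ω + 1) > γ2 ∧ a1 * ρ * H1 ω > γ1}).toReal
      = 1 - Real.exp (-(θ2 / Ω1)) := by
  have hd : 0 < a2 - a1 * γ2 := by linarith
  have hset : {ω | a2 * ρ * H1 ω / (a1 * ρ * H1 ω + 1) > γ2 ∧ a1 * ρ * H1 ω > γ1}
      = {ω | H1 ω > θ2} := by
    ext ω
    simp only [Set.mem_setOf_eq, gt_iff_lt]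
    rw [hθ2, max_lt_iff, div_lt_iff₀ (by positivity), div_lt_iff₀ (by positivity)]
    constructor
    · rintro ⟨h1, h2⟩
      rw [lt_div_iff₀ (by linarith)] at h1
      constructor <;> linarith
    · rintro ⟨h1, h2⟩
      have h3 : γ1 < a1 * ρ * H1 ω := by linarith
      refine ⟨?_, h3⟩
      rw [lt_div_iff₀ (by linarith)]
      linarith
  have hθ : 0 ≤ θ2 := by
    rw [hθ2]
    exact le_max_of_le_right (by positivity)
  rw [hset, hH1 θ2 hθ, ENNReal.toReal_ofReal (Real.exp_pos _).le]
end

section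
/- Let H1 and H2 be independent exponentially distributed random variables with means Ω1, Ω2 > 0. Fix ρ > 0 and a threshold γ2 > 0 with a2 > a1·γ2, and set τ2 = γ2/(ρ(a2 − a1·γ2)). Let γ_rel = a2·ρ·H1/(a1·ρ·H1 + 1). Then the half-duplex outage probability of the far user without direct link, P_out = P(γ_rel < γ2) + P( ρ·H2 < γ2 and γ_rel > γ2 ), satisfies P_out = 1 − exp(−τ2/Ω1 − γ2/(ρ·Ω2)). -/
open MeasureTheory ProbabilityTheory Real

lemma lt_prob_aux {Ω : Type*} [MeasurableSpace Ω] (μ : Measure Ω) [IsProbabilityMeasure μ]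
    (H : Ω → ℝ) (hHm : Measurable H) (m : ℝ)
    (hH : ∀ t : ℝ, 0 ≤ t → μ {ω | H ω > t} = ENNReal.ofReal (Real.exp (-(t / m))))
    (t : ℝ) (ht : 0 < t) : μ.real {ω | H ω < t} = 1 - Real.exp (-(t / m)) := by
  have hr : ∀ s : ℝ, 0 ≤ s → μ.real {ω | H ω > s} = Real.exp (-(s / m)) := by
    intro s hs
    rw [measureReal_def, hH s hs, ENNReal.toReal_ofReal (Real.exp_pos _).le]
  have hge : μ.real {ω | t ≤ H ω} = Real.exp (-(t / m)) := by
    apply le_antisymm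
    · have hc : Filter.Tendsto (fun s : ℝ => Real.exp (-(s / m))) (nhdsWithin t (Set.Iio t))
          (nhds (Real.exp (-(t / m)))) := by
        have : Continuous (fun s : ℝ => Real.exp (-(s / m))) := by fun_prop
        exact this.continuousAt.tendsto.mono_left nhdsWithin_le_nhds
      refine ge_of_tendsto hc ?_
      filter_upwards [Ioo_mem_nhdsLT ht] with s hs
      rw [← hr s hs.1.le]
      exact measureReal_mono (fun ω (hω : t ≤ H ω) => lt_of_lt_of_le hs.2 hω)
    · rw [← hr t ht.le]
      exact measureReal_mono (fun ω (hω : t < H ω) => hω.le)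
  have hms : MeasurableSet {ω | t ≤ H ω} := measurableSet_le measurable_const hHm
  have hc : {ω | H ω < t} = {ω | t ≤ H ω}ᶜ := by
    ext ω; simp
  rw [hc, probReal_compl_eq_one_sub hms, hge]

/-- **HD far-user outage probability without direct link (Corollary 2).**
If `H1` and `H2` are independent exponential random variables with means `Ω1` and `Ω2`,
then the half-duplex outage probability of the far user without direct link has the
stated closed form. -/
theorem hd_far_user_outage_no_direct
    {Ω : Type*} [MeasurableSpace Ω] (μ : Measure Ω) [IsProbabilityMeasure μ]
    (H1 H2 : Ω → ℝ) (hH1m : Measurable H1) (hH2m : Measurable H2)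
    (Ω1 Ω2 : ℝ) (hΩ1 : 0 < Ω1) (hΩ2 : 0 < Ω2)
    (hH1 : ∀ t : ℝ, 0 ≤ t → μ {ω | H1 ω > t} = ENNReal.ofReal (Real.exp (-(t / Ω1))))
    (hH2 : ∀ t : ℝ, 0 ≤ t → μ {ω | H2 ω > t} = ENNReal.ofReal (Real.exp (-(t / Ω2))))
    (hIndep : IndepFun H1 H2 μ)
    (ρ γ2 a1 a2 : ℝ) (hρ : 0 < ρ) (hγ2 : 0 < γ2)
    (ha1 : 0 < a1) (ha : a1 * γ2 < a2)
    (τ2 : ℝ) (hτ2 : τ2 = γ2 / (ρ * (a2 - a1 * γ2))) :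
    (μ {ω | a2 * ρ * H1 ω / (a1 * ρ * H1 ω + 1) < γ2}).toReal
      + (μ {ω | ρ * H2 ω < γ2 ∧ a2 * ρ * H1 ω / (a1 * ρ * H1 ω + 1) > γ2}).toReal
      = 1 - Real.exp (-(τ2 / Ω1) - γ2 / (ρ * Ω2)) := by
  have hd : 0 < a2 - a1 * γ2 := by linarith
  have hτ : 0 < τ2 := by rw [hτ2]; positivity
  have hg : 0 < γ2 / ρ := by positivity
  have hρd : 0 < ρ * (a2 - a1 * γ2) := by positivity
  have hpos : ∀ᵐ ω ∂μ, 0 < H1 ω := by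
    have h0 := hH1 0 le_rfl
    simp only [zero_div, neg_zero, Real.exp_zero, ENNReal.ofReal_one] at h0
    exact (prob_compl_eq_zero_iff (measurableSet_lt measurable_const hH1m)).2 h0
  have e1 : μ {ω | a2 * ρ * H1 ω / (a1 * ρ * H1 ω + 1) < γ2} = μ {ω | H1 ω < τ2} := by
    apply measure_congr
    filter_upwards [hpos] with ω hω
    apply propext
    change a2 * ρ * H1 ω / (a1 * ρ * H1 ω + 1) < γ2 ↔ H1 ω < τ2
    rw [div_lt_iff₀ (by positivity), hτ2, lt_div_iff₀ hρd]
    constructor <;> intro h <;> linarith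
  have e2 : μ {ω | ρ * H2 ω < γ2 ∧ a2 * ρ * H1 ω / (a1 * ρ * H1 ω + 1) > γ2}
      = μ (H1 ⁻¹' Set.Ioi τ2 ∩ H2 ⁻¹' Set.Iio (γ2 / ρ)) := by
    apply measure_congr
    filter_upwards [hpos] with ω hω
    apply propext
    change (ρ * H2 ω < γ2 ∧ γ2 < a2 * ρ * H1 ω / (a1 * ρ * H1 ω + 1)) ↔
      (τ2 < H1 ω ∧ H2 ω < γ2 / ρ)
    rw [lt_div_iff₀ (by positivity), lt_div_iff₀ hρ, hτ2, div_lt_iff₀ hρd]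
    constructor <;> rintro ⟨h, h'⟩ <;> constructor <;> linarith
  rw [e1, e2, hIndep.measure_inter_preimage_eq_mul _ _ measurableSet_Ioi measurableSet_Iio,
    ENNReal.toReal_mul]
  have p1 := lt_prob_aux μ H1 hH1m Ω1 hH1 τ2 hτ
  have p2 := lt_prob_aux μ H2 hH2m Ω2 hH2 (γ2 / ρ) hg
  have p3 : (μ (H1 ⁻¹' Set.Ioi τ2)).toReal = Real.exp (-(τ2 / Ω1)) := by
    have := hH1 τ2 hτ.le
    change (μ {ω | H1 ω > τ2}).toReal = _
    rw [this, ENNReal.toReal_ofReal (Real.exp_pos _).le]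
  change (μ (H2 ⁻¹' Set.Iio (γ2 / ρ))).toReal = _ at p2
  rw [measureReal_def] at p1
  rw [p1, p2, p3, div_div, sub_eq_add_neg (-(τ2 / Ω1)), Real.exp_add]
  ring
end

section
/- Fix thresholds γ1 > 0 and γ2 > 0 with a2 > a1·γ2, and let c = max( γ2/(a2 − a1·γ2), γ1/a1 ). For each ρ > 0 define the full-duplex near-user outage probability P(ρ) = 1 − (Ω1/(Ω1 + c·Ω_LI))·exp(−c/(ρ·Ω1)) (the closed form with θ1(ρ) = c/ρ). Then P(ρ) converges as ρ → ∞ to the positive error floor c·Ω_LI/(Ω1 + c·Ω_LI); consequently the diversity order −lim_{ρ→∞} log P(ρ)/log ρ equals 0. -/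
open Filter Real

/-- **FD near-user error floor and zero diversity order.**
The full-duplex near-user outage probability converges to the positive error floor
`c·Ω_LI/(Ω1 + c·Ω_LI)` as `ρ → ∞`, and the diversity order
`−lim_{ρ→∞} log P(ρ)/log ρ` equals `0`. -/
theorem fd_near_user_zero_diversity
    (Ω1 ΩLI : ℝ) (hΩ1 : 0 < Ω1) (hΩLI : 0 < ΩLI)
    (γ1 γ2 a1 a2 : ℝ) (hγ1 : 0 < γ1) (hγ2 : 0 < γ2)
    (ha1 : 0 < a1) (ha : a1 * γ2 < a2)
    (c : ℝ) (hc : c = max (γ2 / (a2 - a1 * γ2)) (γ1 / a1))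
    (P : ℝ → ℝ)
    (hP : ∀ ρ : ℝ, 0 < ρ →
      P ρ = 1 - Ω1 / (Ω1 + c * ΩLI) * Real.exp (-(c / (ρ * Ω1)))) :
    0 < c * ΩLI / (Ω1 + c * ΩLI) ∧
      Tendsto P atTop (nhds (c * ΩLI / (Ω1 + c * ΩLI))) ∧
      Tendsto (fun ρ : ℝ => -(Real.log (P ρ) / Real.log ρ)) atTop (nhds 0) := by
  have hc0 : 0 < c := by
    rw [hc]
    exact lt_max_of_lt_right (div_pos hγ1 ha1)
  have hD : 0 < Ω1 + c * ΩLI := by positivity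
  have hpos : 0 < c * ΩLI / (Ω1 + c * ΩLI) := by positivity
  have h1 : Tendsto (fun ρ : ℝ => -(c / (ρ * Ω1))) atTop (nhds 0) := by
    have := (tendsto_const_nhds (x := c)).div_atTop
      ((tendsto_id (α := ℝ) (x := atTop)).atTop_mul_const hΩ1)
    simpa using this.neg
  have h2 : Tendsto (fun ρ : ℝ => Real.exp (-(c / (ρ * Ω1)))) atTop (nhds 1) := by
    have := (Real.continuous_exp.tendsto 0).comp h1
    rw [Real.exp_zero] at this
    exact this
  have hlim : Tendsto P atTop (nhds (c * ΩLI / (Ω1 + c * ΩLI))) := by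
    have h3 := (h2.const_mul (Ω1 / (Ω1 + c * ΩLI))).const_sub 1
    have he : 1 - Ω1 / (Ω1 + c * ΩLI) * 1 = c * ΩLI / (Ω1 + c * ΩLI) := by
      field_simp
      ring
    rw [he] at h3
    refine h3.congr' ?_
    filter_upwards [eventually_gt_atTop 0] with ρ hρ
    exact (hP ρ hρ).symm
  refine ⟨hpos, hlim, ?_⟩
  have h4 := (hlim.log hpos.ne').div_atTop Real.tendsto_log_atTop
  simpa using h4.neg
end

section
/- Fix a threshold γ2 > 0 with a2 > a1·γ2, and let c = γ2/(a2 − a1·γ2). For each ρ > 0 define the full-duplex far-user outage probability (no direct link) P(ρ) = 1 − (Ω1/(Ω1 + c·Ω_LI))·exp(−(c/(ρ·Ω1) + γ2/(ρ·Ω2))). Then P(ρ) converges as ρ → ∞ to the positive error floor c·Ω_LI/(Ω1 + c·Ω_LI); consequently the diversity order −lim_{ρ→∞} log P(ρ)/log ρ equals 0. -/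
open Filter Real

/-- **FD far-user (no direct link) error floor and zero diversity order.**
The full-duplex far-user outage probability without direct link converges to the positive
error floor `c·Ω_LI/(Ω1 + c·Ω_LI)` as `ρ → ∞`, and the diversity order
`−lim_{ρ→∞} log P(ρ)/log ρ` equals `0`. -/
theorem fd_far_user_zero_diversity_no_direct
    (Ω1 Ω2 ΩLI : ℝ) (hΩ1 : 0 < Ω1) (hΩ2 : 0 < Ω2) (hΩLI : 0 < ΩLI)
    (γ2 a1 a2 : ℝ) (hγ2 : 0 < γ2) (ha1 : 0 < a1) (ha : a1 * γ2 < a2)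
    (c : ℝ) (hc : c = γ2 / (a2 - a1 * γ2))
    (P : ℝ → ℝ)
    (hP : ∀ ρ : ℝ, 0 < ρ →
      P ρ = 1 - Ω1 / (Ω1 + c * ΩLI) *
        Real.exp (-(c / (ρ * Ω1) + γ2 / (ρ * Ω2)))) :
    0 < c * ΩLI / (Ω1 + c * ΩLI) ∧
      Tendsto P atTop (nhds (c * ΩLI / (Ω1 + c * ΩLI))) ∧
      Tendsto (fun ρ : ℝ => -(Real.log (P ρ) / Real.log ρ)) atTop (nhds 0) := by
  have hcpos : 0 < c := by
    rw [hc]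
    exact div_pos hγ2 (sub_pos.mpr ha)
  have hden : 0 < Ω1 + c * ΩLI := by positivity
  have hfl : 0 < c * ΩLI / (Ω1 + c * ΩLI) := by positivity
  have hdiv : ∀ k Ω : ℝ, 0 < Ω → Tendsto (fun ρ : ℝ => k / (ρ * Ω)) atTop (nhds 0) := by
    intro k Ω hΩ
    exact (tendsto_id.atTop_mul_const hΩ).const_div_atTop k
  have hlim : Tendsto P atTop (nhds (c * ΩLI / (Ω1 + c * ΩLI))) := by
    have h1 := ((hdiv c Ω1 hΩ1).add (hdiv γ2 Ω2 hΩ2)).neg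
    have h2 := (Real.continuous_exp.tendsto _).comp h1
    have h3 := (h2.const_mul (Ω1 / (Ω1 + c * ΩLI))).const_sub 1
    have e : 1 - Ω1 / (Ω1 + c * ΩLI) * Real.exp (-(0 + 0)) = c * ΩLI / (Ω1 + c * ΩLI) := by
      simp only [add_zero, neg_zero, Real.exp_zero, mul_one]
      field_simp
      ring
    rw [e] at h3
    refine h3.congr' ?_
    filter_upwards [eventually_gt_atTop 0] with ρ hρ
    exact (hP ρ hρ).symm
  refine ⟨hfl, hlim, ?_⟩
  have h4 := ((hlim.log hfl.ne').div_atTop Real.tendsto_log_atTop).neg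
  simpa using h4
end

section
/- Let H1 and H_LI be independent exponentially distributed random variables with means Ω1 > 0 and Ω_LI > 0, let ρ > 0, 0 < a1 < 1, and assume Ω_LI ≠ a1·Ω1. Then the full-duplex ergodic rate of the near user satisfies E[ log₂( 1 + a1·ρ·H1/(ρ·H_LI + 1) ) ] = (a1·Ω1 / (ln 2 · (Ω_LI − a1·Ω1))) · [ exp(1/(a1·ρ·Ω1))·Ei(−1/(a1·ρ·Ω1)) − exp(1/(ρ·Ω_LI))·Ei(−1/(ρ·Ω_LI)) ]. -/
open MeasureTheory ProbabilityTheory Real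

/-- The exponential integral: for `x > 0`, `Ei (-x) = -∫_x^∞ e^{-t}/t dt`. -/
noncomputable def Ei (x : ℝ) : ℝ := -∫ t in Set.Ioi (-x), Real.exp (-t) / t

lemma aux_map_exp {Ω : Type*} [MeasurableSpace Ω] (μ : Measure Ω) [IsProbabilityMeasure μ]
    (H : Ω → ℝ) (hm : Measurable H) (m : ℝ) (hmpos : 0 < m)
    (hH : ∀ t : ℝ, 0 ≤ t → μ {ω | H ω > t} = ENNReal.ofReal (Real.exp (-(t / m)))) :
    μ.map H = expMeasure (1 / m) := by
  have hr : 0 < 1 / m := by positivity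
  have := isProbabilityMeasure_expMeasure hr
  have : IsProbabilityMeasure (μ.map H) := Measure.isProbabilityMeasure_map hm.aemeasurable
  apply Measure.eq_of_cdf
  ext x
  rw [cdf_expMeasure_eq hr, cdf_eq_real, measureReal_def, Measure.map_apply hm measurableSet_Iic]
  have key : ∀ t : ℝ, 0 ≤ t → μ (H ⁻¹' Set.Iic t) = ENNReal.ofReal (1 - Real.exp (-(t / m))) := by
    intro t ht
    have h1 : H ⁻¹' Set.Iic t = {ω | H ω > t}ᶜ := by
      ext ω; simp
    rw [h1, prob_compl_eq_one_sub (measurableSet_lt measurable_const hm), hH t ht,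
      ENNReal.ofReal_sub _ (Real.exp_pos _).le, ENNReal.ofReal_one]
  split_ifs with h
  · rw [key x h, ENNReal.toReal_ofReal]
    · congr 3; ring
    · rw [sub_nonneg, Real.exp_le_one_iff]
      have : 0 ≤ x / m := by positivity
      linarith
  · have h0 : μ (H ⁻¹' Set.Iic 0) = 0 := by
      rw [key 0 le_rfl]; simp
    have : μ (H ⁻¹' Set.Iic x) = 0 :=
      measure_mono_null (Set.preimage_mono (Set.Iic_subset_Iic.2 (not_le.1 h).le)) h0
    simp [this]

lemma aux_pos {Ω : Type*} [MeasurableSpace Ω] (μ : Measure Ω) [IsProbabilityMeasure μ]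
    (H : Ω → ℝ) (hm : Measurable H) (m : ℝ)
    (hH : ∀ t : ℝ, 0 ≤ t → μ {ω | H ω > t} = ENNReal.ofReal (Real.exp (-(t / m)))) :
    ∀ᵐ ω ∂μ, 0 < H ω := by
  change μ {ω | 0 < H ω}ᶜ = 0
  rw [prob_compl_eq_one_sub (measurableSet_lt measurable_const hm)]
  have := hH 0 le_rfl
  simp at this
  simp [this]

lemma aux_laplace (r s A : ℝ) (hr : 0 < r) (hs : 0 < s) :
    ∫⁻ y, ENNReal.ofReal (Real.exp (-(A + s * y))) ∂(expMeasure r)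
      = ENNReal.ofReal (Real.exp (-A) * (r / (r + s))) := by
  have hd : expMeasure r = volume.withDensity (exponentialPDF r) := rfl
  have hmeas : Measurable (exponentialPDF r) :=
    (measurable_exponentialPDFReal r).ennreal_ofReal
  rw [hd, lintegral_withDensity_eq_lintegral_mul _ hmeas (by fun_prop)]
  have h1 : ∀ y, (exponentialPDF r * fun y => ENNReal.ofReal (Real.exp (-(A + s * y)))) y
      = (Set.Ici (0:ℝ)).indicator
        (fun y => ENNReal.ofReal (r * Real.exp (-A) * Real.exp (-(r + s) * y))) y := by
    intro y
    by_cases hy : 0 ≤ y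
    · rw [Set.indicator_of_mem (show y ∈ Set.Ici (0:ℝ) from hy), Pi.mul_apply,
        exponentialPDF_of_nonneg hy, ← ENNReal.ofReal_mul (by positivity)]
      congr 1
      rw [mul_assoc, mul_assoc, ← Real.exp_add, ← Real.exp_add]
      congr 2; ring
    · rw [Set.indicator_of_notMem (show y ∉ Set.Ici (0:ℝ) from hy), Pi.mul_apply,
        exponentialPDF_of_neg (not_le.1 hy), zero_mul]
  rw [lintegral_congr h1, lintegral_indicator measurableSet_Ici,
    setLIntegral_congr Ioi_ae_eq_Ici.symm,
    ← ofReal_integral_eq_lintegral_ofReal]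
  · rw [integral_const_mul, integral_exp_mul_Ioi (by linarith)]
    congr 1
    have : r + s ≠ 0 := by positivity
    rw [mul_zero, Real.exp_zero, neg_div_neg_eq]
    field_simp
  · exact (integrableOn_exp_mul_Ioi (by linarith) 0).const_mul _
  · exact Filter.Eventually.of_forall fun y => by positivity

lemma aux_frac (c b : ℝ) (hc : 0 < c) (hb : 0 < b) :
    ∫ x in Set.Ioi (0:ℝ), b * Real.exp (-(x / c)) / (1 + b * x)
      = - (Real.exp (1 / (b * c)) * Ei (-(1 / (b * c)))) := by
  have h1 := integral_comp_mul_left_Ioi (fun t => Real.exp (-t) / t) (1 / b) (inv_pos.2 hc)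
  have h2 : ∫ x in Set.Ioi (0:ℝ), Real.exp (-(c⁻¹ * (x + 1 / b))) / (c⁻¹ * (x + 1 / b))
      = ∫ x in Set.Ioi (1 / b), Real.exp (-(c⁻¹ * x)) / (c⁻¹ * x) := by
    have := (measurePreserving_add_right volume (1 / b)).setIntegral_preimage_emb
      (measurableEmbedding_addRight (1 / b))
      (fun x => Real.exp (-(c⁻¹ * x)) / (c⁻¹ * x)) (Set.Ioi (1 / b))
    rw [← this]
    simp
  rw [← h2] at h1
  have h3 : c⁻¹ * (1 / b) = 1 / (b * c) := by field_simp
  rw [h3] at h1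
  have h4 : ∫ t in Set.Ioi (1 / (b * c)), Real.exp (-t) / t = - Ei (-(1 / (b * c))) := by
    simp [Ei]
  rw [h4, inv_inv, smul_eq_mul] at h1
  have h5 : ∀ x ∈ Set.Ioi (0:ℝ), b * Real.exp (-(x / c)) / (1 + b * x)
      = (Real.exp (1 / (b * c)) / c) *
        (Real.exp (-(c⁻¹ * (x + 1 / b))) / (c⁻¹ * (x + 1 / b))) := by
    intro x hx
    have hx : 0 < x := hx
    have e : Real.exp (-(x / c)) = Real.exp (1 / (b * c)) * Real.exp (-(c⁻¹ * (x + 1 / b))) := by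
      rw [← Real.exp_add]; congr 1; field_simp; ring
    rw [e]
    have : 1 + b * x ≠ 0 := by positivity
    have : x + 1 / b ≠ 0 := by positivity
    field_simp
    ring
  rw [setIntegral_congr_fun measurableSet_Ioi h5, integral_const_mul, h1]
  field_simp

lemma aux_frac_int (c b : ℝ) (hc : 0 < c) (hb : 0 < b) :
    IntegrableOn (fun x => b * Real.exp (-(x / c)) / (1 + b * x)) (Set.Ioi (0:ℝ)) := by
  have h := (integrableOn_exp_mul_Ioi (a := -(1 / c)) (by simpa using hc) 0).const_mul b
  refine Integrable.mono' h (Measurable.aestronglyMeasurable (by fun_prop)) ?_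
  refine (ae_restrict_iff' measurableSet_Ioi).2 (Filter.Eventually.of_forall fun x hx => ?_)
  have hx : 0 < x := hx
  have e : -(x / c) = -(1 / c) * x := by ring
  rw [Real.norm_of_nonneg (by positivity), e]
  exact div_le_self (by positivity) (by nlinarith [mul_pos hb hx])

lemma aux_tail {Ω : Type*} [MeasurableSpace Ω] (μ : Measure Ω) [IsProbabilityMeasure μ]
    (H1 HLI : Ω → ℝ) (hH1m : Measurable H1) (hHLIm : Measurable HLI)
    (Ω1 ΩLI : ℝ) (hΩ1 : 0 < Ω1) (hΩLI : 0 < ΩLI)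
    (hH1 : ∀ t : ℝ, 0 ≤ t → μ {ω | H1 ω > t} = ENNReal.ofReal (Real.exp (-(t / Ω1))))
    (hHLI : ∀ t : ℝ, 0 ≤ t → μ {ω | HLI ω > t} = ENNReal.ofReal (Real.exp (-(t / ΩLI))))
    (hIndep : IndepFun H1 HLI μ)
    (ρ a1 : ℝ) (hρ : 0 < ρ) (ha1 : 0 < a1) (t : ℝ) (ht : 0 < t) :
    μ {ω | t < a1 * ρ * H1 ω / (ρ * HLI ω + 1)}
      = ENNReal.ofReal (Real.exp (-(t / (a1 * ρ * Ω1))) *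
          (1 / (1 + ΩLI / (a1 * Ω1) * t))) := by
  have hp := aux_pos μ HLI hHLIm ΩLI hHLI
  have hmap := aux_map_exp μ HLI hHLIm ΩLI hΩLI hHLI
  have hprod := (indepFun_iff_map_prod_eq_prod_map_map hH1m.aemeasurable
    hHLIm.aemeasurable).1 hIndep
  have : IsProbabilityMeasure (μ.map H1) := Measure.isProbabilityMeasure_map hH1m.aemeasurable
  have : IsProbabilityMeasure (μ.map HLI) := Measure.isProbabilityMeasure_map hHLIm.aemeasurable
  set S : Set (ℝ × ℝ) := {p | t * (ρ * p.2 + 1) / (a1 * ρ) < p.1} with hS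
  have hSm : MeasurableSet S := measurableSet_lt (by fun_prop) (by fun_prop)
  have e1 : μ {ω | t < a1 * ρ * H1 ω / (ρ * HLI ω + 1)} = μ ((fun ω => (H1 ω, HLI ω)) ⁻¹' S) := by
    apply measure_congr
    filter_upwards [hp] with ω hω
    apply propext
    change t < a1 * ρ * H1 ω / (ρ * HLI ω + 1) ↔ t * (ρ * HLI ω + 1) / (a1 * ρ) < H1 ω
    rw [lt_div_iff₀ (by positivity), div_lt_iff₀ (by positivity), mul_comm (H1 ω)]
  rw [e1, ← Measure.map_apply (by fun_prop) hSm, hprod, Measure.prod_apply_symm hSm]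
  have hp' : ∀ᵐ y ∂(μ.map HLI), 0 < y :=
    (ae_map_iff hHLIm.aemeasurable measurableSet_Ioi).2 hp
  have e2 : ∀ᵐ y ∂(μ.map HLI), (μ.map H1) ((fun x => (x, y)) ⁻¹' S)
      = ENNReal.ofReal (Real.exp (-(t / (a1 * ρ * Ω1) + t / (a1 * Ω1) * y))) := by
    filter_upwards [hp'] with y hy
    rw [Measure.map_apply hH1m (measurable_prodMk_right hSm)]
    have := hH1 (t * (ρ * y + 1) / (a1 * ρ)) (by positivity)
    have e3 : t * (ρ * y + 1) / (a1 * ρ) / Ω1 = t / (a1 * ρ * Ω1) + t / (a1 * Ω1) * y := by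
      field_simp
      ring
    rw [e3] at this
    exact this
  rw [lintegral_congr_ae e2, hmap, aux_laplace _ _ _ (by positivity) (by positivity)]
  congr 2
  field_simp



/-- **FD near-user ergodic rate (Theorem 3).**
If `H1` and `HLI` are independent exponential random variables with means `Ω1` and `ΩLI`,
then the full-duplex ergodic rate of the near user has the stated closed form. -/
theorem fd_near_user_ergodic_rate
    {Ω : Type*} [MeasurableSpace Ω] (μ : Measure Ω) [IsProbabilityMeasure μ]
    (H1 HLI : Ω → ℝ) (hH1m : Measurable H1) (hHLIm : Measurable HLI)
    (Ω1 ΩLI : ℝ) (hΩ1 : 0 < Ω1) (hΩLI : 0 < ΩLI)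
    (hH1 : ∀ t : ℝ, 0 ≤ t → μ {ω | H1 ω > t} = ENNReal.ofReal (Real.exp (-(t / Ω1))))
    (hHLI : ∀ t : ℝ, 0 ≤ t → μ {ω | HLI ω > t} = ENNReal.ofReal (Real.exp (-(t / ΩLI))))
    (hIndep : IndepFun H1 HLI μ)
    (ρ a1 : ℝ) (hρ : 0 < ρ) (ha1 : 0 < a1) (ha1' : a1 < 1)
    (hne : ΩLI ≠ a1 * Ω1) :
    ∫ ω, Real.logb 2 (1 + a1 * ρ * H1 ω / (ρ * HLI ω + 1)) ∂μ
      = a1 * Ω1 / (Real.log 2 * (ΩLI - a1 * Ω1)) *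
        (Real.exp (1 / (a1 * ρ * Ω1)) * Ei (-(1 / (a1 * ρ * Ω1)))
          - Real.exp (1 / (ρ * ΩLI)) * Ei (-(1 / (ρ * ΩLI)))) := by
  have hp1 := aux_pos μ H1 hH1m Ω1 hH1
  have hpL := aux_pos μ HLI hHLIm ΩLI hHLI
  set b := ΩLI / (a1 * Ω1) with hb
  set c := a1 * ρ * Ω1 with hc
  have hbpos : 0 < b := by positivity
  have hcpos : 0 < c := by positivity
  have hb1 : b - 1 ≠ 0 := by
    rw [hb, sub_ne_zero]
    intro h
    rw [div_eq_one_iff_eq (by positivity)] at h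
    exact hne h
  have hlog : ∀ x : ℝ, 0 ≤ x → ∫ t in (0:ℝ)..x, 1 / (1 + t) = Real.log (1 + x) := by
    intro x hx
    have := intervalIntegral.integral_comp_add_left (a := 0) (b := x) (fun t : ℝ => t⁻¹) 1
    simp only [one_div]
    rw [this, integral_inv_of_pos (by norm_num) (by linarith)]
    simp
  have hXpos : ∀ᵐ ω ∂μ, 0 ≤ a1 * ρ * H1 ω / (ρ * HLI ω + 1) := by
    filter_upwards [hp1, hpL] with ω h1 h2
    positivity
  have hXm : Measurable fun ω => a1 * ρ * H1 ω / (ρ * HLI ω + 1) := by fun_prop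
  have hlayer := lintegral_comp_eq_lintegral_meas_lt_mul (g := fun t : ℝ => 1 / (1 + t)) μ hXpos
    hXm.aemeasurable
    (by
      intro t ht
      apply ContinuousOn.intervalIntegrable
      rw [Set.uIcc_of_le ht.le]
      apply ContinuousOn.div (by fun_prop) (by fun_prop)
      intro x hx
      have := hx.1
      positivity)
    ((ae_restrict_iff' measurableSet_Ioi).2 (Filter.Eventually.of_forall fun t ht => by
      have : (0:ℝ) < t := ht
      positivity))
  have hmain : ∫ ω, Real.log (1 + a1 * ρ * H1 ω / (ρ * HLI ω + 1)) ∂μ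
      = ∫ t in Set.Ioi (0:ℝ), Real.exp (-(t / c)) * (1 / (1 + b * t)) * (1 / (1 + t)) := by
    rw [integral_eq_lintegral_of_nonneg_ae, integral_eq_lintegral_of_nonneg_ae]
    · congr 1
      have e1 : ∫⁻ ω, ENNReal.ofReal (Real.log (1 + a1 * ρ * H1 ω / (ρ * HLI ω + 1))) ∂μ
          = ∫⁻ ω, ENNReal.ofReal
            (∫ t in (0:ℝ)..(a1 * ρ * H1 ω / (ρ * HLI ω + 1)), 1 / (1 + t)) ∂μ := by
        apply lintegral_congr_ae
        filter_upwards [hXpos] with ω hω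
        rw [hlog _ hω]
      rw [e1, hlayer]
      apply setLIntegral_congr_fun measurableSet_Ioi
      intro t ht
      have ht : 0 < t := ht
      simp only []
      rw [aux_tail μ H1 HLI hH1m hHLIm Ω1 ΩLI hΩ1 hΩLI hH1 hHLI hIndep ρ a1 hρ ha1 t ht,
        ← ENNReal.ofReal_mul (by positivity)]
    · refine (ae_restrict_iff' measurableSet_Ioi).2 (Filter.Eventually.of_forall fun t ht => ?_)
      have ht : 0 < t := ht
      simp only [Pi.zero_apply]
      positivity
    · exact Measurable.aestronglyMeasurable (by fun_prop)
    · filter_upwards [hXpos] with ω hω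
      exact Real.log_nonneg (by linarith)
    · exact Measurable.aestronglyMeasurable (by fun_prop)
  have hsplit : ∀ t ∈ Set.Ioi (0:ℝ),
      Real.exp (-(t / c)) * (1 / (1 + b * t)) * (1 / (1 + t))
        = (1 / (b - 1)) * (b * Real.exp (-(t / c)) / (1 + b * t)
          - 1 * Real.exp (-(t / c)) / (1 + 1 * t)) := by
    intro t ht
    have ht : 0 < t := ht
    have h1 : 1 + b * t ≠ 0 := by positivity
    have h2 : 1 + t ≠ 0 := by positivity
    rw [one_mul, one_mul]
    field_simp
    ring
  have hfinal : ∫ ω, Real.log (1 + a1 * ρ * H1 ω / (ρ * HLI ω + 1)) ∂μ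
      = (1 / (b - 1)) * (Real.exp (1 / c) * Ei (-(1 / c))
        - Real.exp (1 / (ρ * ΩLI)) * Ei (-(1 / (ρ * ΩLI)))) := by
    rw [hmain, setIntegral_congr_fun measurableSet_Ioi hsplit, integral_const_mul,
      integral_sub (aux_frac_int c b hcpos hbpos) (aux_frac_int c 1 hcpos one_pos),
      aux_frac c b hcpos hbpos, aux_frac c 1 hcpos one_pos]
    have hbc : b * c = ρ * ΩLI := by rw [hb, hc]; field_simp
    rw [hbc, one_mul]
    ring
  simp only [Real.logb]
  rw [integral_div, hfinal]
  have h3 : 1 / (b - 1) = a1 * Ω1 / (ΩLI - a1 * Ω1) := by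
    have : ΩLI - a1 * Ω1 ≠ 0 := sub_ne_zero.2 hne
    rw [div_eq_div_iff hb1 this, hb]
    field_simp
  rw [h3, mul_div_right_comm, div_div, mul_comm (Real.log 2)]
end

section
/- Let H1 be an exponentially distributed random variable with mean Ω1 > 0, let ρ > 0 and 0 < a1 < 1. Then the half-duplex ergodic rate of the near user satisfies (1/2)·E[ log₂(1 + a1·ρ·H1) ] = −( exp(1/(a1·ρ·Ω1)) / (2 ln 2) ) · Ei(−1/(a1·ρ·Ω1)). -/
open MeasureTheory ProbabilityTheory Real

/-- **HD near-user ergodic rate (Corollary 3).**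
If `H1` is exponential with mean `Ω1`, the half-duplex ergodic rate of the near user
(with the factor `1/2` for the two time slots) has the stated closed form. -/
theorem hd_near_user_ergodic_rate
    {Ω : Type*} [MeasurableSpace Ω] (μ : Measure Ω) [IsProbabilityMeasure μ]
    (H1 : Ω → ℝ) (hH1m : Measurable H1)
    (Ω1 : ℝ) (hΩ1 : 0 < Ω1)
    (hH1 : ∀ t : ℝ, 0 ≤ t → μ {ω | H1 ω > t} = ENNReal.ofReal (Real.exp (-(t / Ω1))))
    (ρ a1 : ℝ) (hρ : 0 < ρ) (ha1 : 0 < a1) (ha1' : a1 < 1) :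
    (1 / 2) * ∫ ω, Real.logb 2 (1 + a1 * ρ * H1 ω) ∂μ
      = -(Real.exp (1 / (a1 * ρ * Ω1)) / (2 * Real.log 2)) *
          Ei (-(1 / (a1 * ρ * Ω1))) := by
  obtain ⟨c, hc⟩ : ∃ c, c = a1 * ρ := ⟨_, rfl⟩
  have hc0 : 0 < c := hc ▸ mul_pos ha1 hρ
  rw [← hc]
  have hpos : ∀ᵐ ω ∂μ, 0 < H1 ω := by
    have h0 := hH1 0 le_rfl
    simp only [zero_div, neg_zero, Real.exp_zero, ENNReal.ofReal_one] at h0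
    exact (prob_compl_eq_zero_iff (measurableSet_lt measurable_const hH1m)).2 h0
  have hftc : ∀ h : ℝ, 0 < h → ∫ t in (0:ℝ)..h, c / (1 + c * t) = Real.log (1 + c * h) := by
    intro h hh
    have hp : ∀ x ∈ Set.uIcc 0 h, 0 < 1 + c * x := by
      intro x hx
      rw [Set.uIcc_of_le hh.le] at hx
      have := mul_nonneg hc0.le hx.1
      linarith
    rw [intervalIntegral.integral_eq_sub_of_hasDerivAt (f := fun t => Real.log (1 + c * t))]
    · simp
    · intro x hx
      have h1 : HasDerivAt (fun t : ℝ => 1 + c * t) c x := by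
        simpa using ((hasDerivAt_id x).const_mul c).const_add 1
      exact h1.log (hp x hx).ne'
    · apply ContinuousOn.intervalIntegrable
      exact ContinuousOn.div (by fun_prop) (by fun_prop) (fun x hx => (hp x hx).ne')
  have hlog : ∫ ω, Real.log (1 + c * H1 ω) ∂μ
      = ∫ t in Set.Ioi (0:ℝ), Real.exp (-(t / Ω1)) * (c / (1 + c * t)) := by
    have hg0 : ∀ t ∈ Set.Ioi (0:ℝ), 0 ≤ c / (1 + c * t) := by
      intro t ht
      have ht : 0 < t := ht
      positivity
    rw [integral_eq_lintegral_of_nonneg_ae, integral_eq_lintegral_of_nonneg_ae]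
    · congr 1
      have key := lintegral_comp_eq_lintegral_meas_lt_mul (μ := μ) (f := H1)
        (g := fun t => c / (1 + c * t)) (hpos.mono fun _ h => h.le) hH1m.aemeasurable
        (fun t ht => by
          apply ContinuousOn.intervalIntegrable
          refine ContinuousOn.div (by fun_prop) (by fun_prop) (fun x hx => ?_)
          rw [Set.uIcc_of_le ht.le] at hx
          have := mul_nonneg hc0.le hx.1
          positivity)
        ((ae_restrict_iff' measurableSet_Ioi).2 (ae_of_all _ hg0))
      rw [lintegral_congr_ae (hpos.mono fun ω h => by
        show ENNReal.ofReal (Real.log (1 + c * H1 ω)) = 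
          ENNReal.ofReal (∫ t in (0:ℝ)..H1 ω, c / (1 + c * t))
        rw [hftc _ h]), key]
      refine setLIntegral_congr_fun measurableSet_Ioi (fun t ht => ?_)
      have h2 := hH1 t (le_of_lt ht)
      simp only [gt_iff_lt] at h2
      simp only [h2]
      rw [ENNReal.ofReal_mul (Real.exp_pos _).le]
    · refine (ae_restrict_iff' measurableSet_Ioi).2 (ae_of_all _ fun t ht => ?_)
      exact mul_nonneg (Real.exp_pos _).le (hg0 t ht)
    · exact (by fun_prop : Measurable fun t : ℝ => 
        Real.exp (-(t / Ω1)) * (c / (1 + c * t))).aestronglyMeasurable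
    · filter_upwards [hpos] with ω h
      exact Real.log_nonneg (by have := mul_pos hc0 h; linarith)
    · exact (by fun_prop : Measurable fun ω => Real.log (1 + c * H1 ω)).aestronglyMeasurable
  have hsub : ∫ t in Set.Ioi (0:ℝ), Real.exp (-(t / Ω1)) * (c / (1 + c * t))
      = Real.exp (1 / (c * Ω1)) * ∫ t in Set.Ioi (1 / (c * Ω1)), Real.exp (-t) / t := by
    have h1 := integral_comp_mul_left_Ioi
      (fun s => Real.exp (-(s + 1 / (c * Ω1))) / (s + 1 / (c * Ω1))) 0 (inv_pos.2 hΩ1)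
    have h2 := (measurePreserving_add_right volume (1 / (c * Ω1))).setIntegral_preimage_emb
      (measurableEmbedding_addRight (1 / (c * Ω1))) (fun s => Real.exp (-s) / s)
      (Set.Ioi (1 / (c * Ω1)))
    rw [Set.preimage_add_const_Ioi, sub_self] at h2
    rw [mul_zero, h2, inv_inv, smul_eq_mul] at h1
    have h3 : ∫ t in Set.Ioi (1 / (c * Ω1)), Real.exp (-t) / t = Ω1⁻¹ * (Ω1 * ∫ t in Set.Ioi (1 / (c * Ω1)), Real.exp (-t) / t) := by
      field_simp
    rw [h3, ← h1, ← integral_const_mul, ← integral_const_mul]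
    refine setIntegral_congr_fun measurableSet_Ioi (fun t ht => ?_)
    have ht : 0 < t := ht
    have h4 : Real.exp (-(t / Ω1)) = Real.exp (1 / (c * Ω1)) *
        Real.exp (-(Ω1⁻¹ * t + 1 / (c * Ω1))) := by
      rw [← Real.exp_add]; congr 1; ring
    simp only [h4]
    field_simp
    ring
  simp only [Real.logb, integral_div, hlog, hsub, Ei, neg_neg]
  ring
end

section
/- Let Ω1, Ω2, Ω_LI, ρ > 0, let a1, a2 satisfy 0 < a1 < a2 and a1 + a2 = 1, assume ξ := Ω_LI − a1·Ω1 > 0 and a2·Ω1 ≠ ξ. Then (1/ln 2)·∫₀^{a2/a1} (1/(1+y)) · exp(−y/(ρ·Ω2)) · (a2 − a1·y)·Ω1 / ( (a2 − a1·y)·Ω1 + y·Ω_LI ) dy = (1/ln 2)·{ exp(1/(ρ·Ω2))·[ Ei(−1/(ρ·a1·Ω2)) − Ei(−1/(ρ·Ω2)) ]·( Ω1/(a2·Ω1 − ξ) ) − ( exp(a2·Ω1/(ρ·Ω2·ξ))/ξ )·[ Ei( −(a2·ξ + a1·a2·Ω1)/(ρ·a1·ξ·Ω2) ) − Ei( −a2·Ω1/(ρ·Ω2·ξ)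 ) ]·( (a1·a2·Ω1² + a2·Ω1·ξ)/(a2·Ω1 − ξ) ) }. -/
open MeasureTheory Real

lemma Ei_integrableOn (p : ℝ) (hp : 0 < p) :
    IntegrableOn (fun t : ℝ => Real.exp (-t) / t) (Set.Ioi p) := by
  have h1 : IntegrableOn (fun t : ℝ => Real.exp (-1 * t) * p⁻¹) (Set.Ioi p) :=
    (exp_neg_integrableOn_Ioi p one_pos).mul_const _
  refine Integrable.mono' h1 (Measurable.aestronglyMeasurable (by fun_prop)) ?_
  refine (ae_restrict_iff' measurableSet_Ioi).2 (Filter.Eventually.of_forall ?_)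
  intro t ht
  have ht' : p < t := ht
  have h0 : 0 < t := hp.trans ht'
  rw [Real.norm_of_nonneg (by positivity), div_eq_mul_inv, neg_one_mul]
  gcongr

lemma Ei_sub (p q : ℝ) (hp : 0 < p) (hpq : p ≤ q) :
    Ei (-q) - Ei (-p) = ∫ t in p..q, Real.exp (-t) / t := by
  have h := intervalIntegral.integral_Ioi_sub_Ioi (Ei_integrableOn p hp) hpq
  unfold Ei
  rw [neg_neg, neg_neg, ← h]
  ring

lemma key (b c u : ℝ) (hb : 0 < b) (hc : 0 < c) (hu : 0 ≤ u) :
    ∫ y in (0 : ℝ)..u, Real.exp (-(y / c)) / (y + b)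
      = Real.exp (b / c) * (Ei (-((u + b) / c)) - Ei (-(b / c))) := by
  rw [Ei_sub (b / c) ((u + b) / c) (by positivity) (by gcongr; linarith)]
  have h := intervalIntegral.integral_comp_div_add (a := 0) (b := u)
    (fun t : ℝ => Real.exp (-t) / t) hc.ne' (b / c)
  rw [zero_div, zero_add, ← add_div, smul_eq_mul] at h
  have h2 : ∫ t in (b / c)..((u + b) / c), Real.exp (-t) / t
      = c⁻¹ * ∫ y in (0 : ℝ)..u, Real.exp (-(y / c + b / c)) / (y / c + b / c) := by
    rw [h]; field_simp
  rw [h2, ← intervalIntegral.integral_const_mul, ← intervalIntegral.integral_const_mul]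
  refine intervalIntegral.integral_congr fun y hy => ?_
  rw [Set.uIcc_of_le hu] at hy
  have hy0 : 0 < y + b := by linarith [hy.1]
  have e : Real.exp (-(y / c)) = Real.exp (b / c) * Real.exp (-(y / c + b / c)) := by
    rw [← Real.exp_add]; congr 1; ring
  simp only [e]
  rw [← add_div]
  field_simp

lemma key_int (b c u : ℝ) (hb : 0 < b) (hu : 0 ≤ u) :
    IntervalIntegrable (fun y => Real.exp (-(y / c)) / (y + b)) volume 0 u := by
  apply ContinuousOn.intervalIntegrable
  rw [Set.uIcc_of_le hu]
  refine ContinuousOn.div (by fun_prop) (by fun_prop) fun y hy => ?_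
  linarith [hy.1]

/-- **High-SNR approximation of the FD far-user ergodic rate without direct link
(Theorem 4).** -/
theorem fd_far_user_ergodic_rate_high_snr
    (Ω1 Ω2 ΩLI ρ : ℝ) (hΩ1 : 0 < Ω1) (hΩ2 : 0 < Ω2) (hΩLI : 0 < ΩLI) (hρ : 0 < ρ)
    (a1 a2 : ℝ) (ha1 : 0 < a1) (ha12 : a1 < a2) (hsum : a1 + a2 = 1)
    (ξ : ℝ) (hξdef : ξ = ΩLI - a1 * Ω1) (hξ : 0 < ξ) (hne : a2 * Ω1 ≠ ξ) :
    (1 / Real.log 2) * ∫ y in (0 : ℝ)..(a2 / a1),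
        (1 / (1 + y)) * Real.exp (-(y / (ρ * Ω2))) *
          ((a2 - a1 * y) * Ω1 / ((a2 - a1 * y) * Ω1 + y * ΩLI))
      = (1 / Real.log 2) *
          (Real.exp (1 / (ρ * Ω2)) *
              (Ei (-(1 / (ρ * a1 * Ω2))) - Ei (-(1 / (ρ * Ω2)))) *
              (Ω1 / (a2 * Ω1 - ξ))
            - (Real.exp (a2 * Ω1 / (ρ * Ω2 * ξ)) / ξ) *
              (Ei (-((a2 * ξ + a1 * a2 * Ω1) / (ρ * a1 * ξ * Ω2)))
                - Ei (-(a2 * Ω1 / (ρ * Ω2 * ξ)))) *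
              ((a1 * a2 * Ω1 ^ 2 + a2 * Ω1 * ξ) / (a2 * Ω1 - ξ))) := by
  have hc : 0 < ρ * Ω2 := by positivity
  have ha2 : 0 < a2 := ha1.trans ha12
  have hu : 0 ≤ a2 / a1 := by positivity
  have hb : 0 < a2 * Ω1 / ξ := by positivity
  have hd : a2 * Ω1 - ξ ≠ 0 := sub_ne_zero.2 hne
  congr 1
  have k1 := key 1 (ρ * Ω2) (a2 / a1) one_pos hc hu
  have k2 := key (a2 * Ω1 / ξ) (ρ * Ω2) (a2 / a1) hb hc hu
  have e1 : (a2 / a1 + 1) / (ρ * Ω2) = 1 / (ρ * a1 * Ω2) := by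
    field_simp; linarith
  have e2 : (a2 / a1 + a2 * Ω1 / ξ) / (ρ * Ω2)
      = (a2 * ξ + a1 * a2 * Ω1) / (ρ * a1 * ξ * Ω2) := by
    field_simp
  have e3 : a2 * Ω1 / ξ / (ρ * Ω2) = a2 * Ω1 / (ρ * Ω2 * ξ) := by
    field_simp
  rw [e1] at k1
  rw [e2, e3] at k2
  have split : ∫ y in (0 : ℝ)..(a2 / a1),
        (1 / (1 + y)) * Real.exp (-(y / (ρ * Ω2))) *
          ((a2 - a1 * y) * Ω1 / ((a2 - a1 * y) * Ω1 + y * ΩLI))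
      = ∫ y in (0 : ℝ)..(a2 / a1),
        (Ω1 / (a2 * Ω1 - ξ) * (Real.exp (-(y / (ρ * Ω2))) / (y + 1))
          - (a1 * a2 * Ω1 ^ 2 + a2 * Ω1 * ξ) / (a2 * Ω1 - ξ) / ξ *
            (Real.exp (-(y / (ρ * Ω2))) / (y + a2 * Ω1 / ξ))) := by
    refine intervalIntegral.integral_congr fun y hy => ?_
    rw [Set.uIcc_of_le hu] at hy
    have hy0 : 0 ≤ y := hy.1
    have hD : (a2 - a1 * y) * Ω1 + y * ΩLI = y * ξ + a2 * Ω1 := by rw [hξdef]; ring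
    have hD0 : y * ξ + a2 * Ω1 ≠ 0 := by positivity
    have h10 : 1 + y ≠ 0 := by positivity
    have hq : y + a2 * Ω1 / ξ = (y * ξ + a2 * Ω1) / ξ := by field_simp
    simp only [hD, hq]
    rw [add_comm y 1]
    generalize Real.exp (-(y / (ρ * Ω2))) = E
    obtain rfl : a2 = 1 - a1 := by linarith
    field_simp
    ring
  rw [split, intervalIntegral.integral_sub ((key_int _ _ _ one_pos hu).const_mul _)
      ((key_int _ _ _ hb hu).const_mul _), intervalIntegral.integral_const_mul,
      intervalIntegral.integral_const_mul, k1, k2]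
  ring
end

section
/- Let Ω1, Ω_LI > 0, let a1, a2 satisfy 0 < a1 < a2 and a1 + a2 = 1, set ξ = Ω_LI − a1·Ω1, and assume ξ ≠ 0 and a2·Ω1 ≠ ξ. Then ∫₀^{a2/a1} (1/(1+y)) · (a2 − a1·y)·Ω1 / ( (a2 − a1·y)·Ω1 + y·Ω_LI ) dy = ln(1 + a2/a1)·( Ω1/(a2·Ω1 − ξ) ) − (1/ξ)·ln(1 + ξ/(a1·Ω1))·( (a2·Ω1·ξ + a1·a2·Ω1²)/(a2·Ω1 − ξ) ). In particular, the high-SNR asymptotic ergodic rate of the far user with direct link in full-duplex NOMA equals 1/ln 2 times this quantity, which is independent of ρ, so the far user's high-SNR slope is zero. -/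
open MeasureTheory Filter Real

/-- **High-SNR asymptotic ergodic rate of the FD far user with direct link
(Theorem 6).** The defining integral has the stated closed form; in particular the
asymptotic ergodic rate `(1/ln 2)` times this quantity is independent of `ρ`, so the
far user's high-SNR slope is zero. -/
theorem fd_far_user_ergodic_rate_direct_high_snr
    (Ω1 ΩLI : ℝ) (hΩ1 : 0 < Ω1) (hΩLI : 0 < ΩLI)
    (a1 a2 : ℝ) (ha1 : 0 < a1) (ha12 : a1 < a2) (hsum : a1 + a2 = 1)
    (ξ : ℝ) (hξdef : ξ = ΩLI - a1 * Ω1) (hξ : ξ ≠ 0) (hne : a2 * Ω1 ≠ ξ) :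
    (∫ y in (0 : ℝ)..(a2 / a1),
        (1 / (1 + y)) * ((a2 - a1 * y) * Ω1 / ((a2 - a1 * y) * Ω1 + y * ΩLI)))
      = Real.log (1 + a2 / a1) * (Ω1 / (a2 * Ω1 - ξ))
        - (1 / ξ) * Real.log (1 + ξ / (a1 * Ω1)) *
            ((a2 * Ω1 * ξ + a1 * a2 * Ω1 ^ 2) / (a2 * Ω1 - ξ)) ∧
      Tendsto
        (fun ρ : ℝ =>
          ((1 / Real.log 2) *
              ∫ y in (0 : ℝ)..(a2 / a1),
                (1 / (1 + y)) *
                  ((a2 - a1 * y) * Ω1 / ((a2 - a1 * y) * Ω1 + y * ΩLI))) /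
            Real.logb 2 ρ)
        atTop (nhds 0) := by
  have ha2 : 0 < a2 := ha1.trans ha12
  have hL : ΩLI = ξ + a1 * Ω1 := by rw [hξdef]; ring
  have hd : a2 * Ω1 - ξ ≠ 0 := sub_ne_zero.mpr hne
  have hq : 0 < a2 / a1 := div_pos ha2 ha1
  constructor
  · have hpos : ∀ y ∈ Set.uIcc (0 : ℝ) (a2 / a1), 0 < 1 + y ∧ 0 < a2 * Ω1 + ξ * y := by
      intro y hy
      rw [Set.uIcc_of_le hq.le] at hy
      obtain ⟨h0, h1⟩ := hy
      refine ⟨by linarith, ?_⟩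
      have h2 : a1 * y ≤ a2 := by
        rw [le_div_iff₀ ha1] at h1; linarith
      have h3 : a2 * Ω1 + ξ * y = (a2 - a1 * y) * Ω1 + y * ΩLI := by rw [hL]; ring
      rw [h3]
      rcases h0.eq_or_lt with h | h
      · subst h; simp; positivity
      · have := mul_nonneg (sub_nonneg.mpr h2) hΩ1.le
        have := mul_pos h hΩLI
        linarith
    have hden : ∀ y : ℝ, (a2 - a1 * y) * Ω1 + y * ΩLI = a2 * Ω1 + ξ * y := by
      intro y; rw [hL]; ring
    simp only [hden]
    have key := intervalIntegral.integral_eq_sub_of_hasDerivAt (a := 0) (b := a2 / a1)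
      (f := fun y => Ω1 / (a2 * Ω1 - ξ) * Real.log (1 + y)
        - (1 / ξ) * ((a2 * Ω1 * ξ + a1 * a2 * Ω1 ^ 2) / (a2 * Ω1 - ξ))
          * Real.log (a2 * Ω1 + ξ * y))
      (f' := fun y => (1 / (1 + y)) * ((a2 - a1 * y) * Ω1 / (a2 * Ω1 + ξ * y))) ?_ ?_
    · rw [key]
      have hlog : Real.log (1 + ξ / (a1 * Ω1))
          = Real.log (a2 * Ω1 + ξ * (a2 / a1)) - Real.log (a2 * Ω1) := by
        rw [← Real.log_div (hpos _ Set.right_mem_uIcc).2.ne' (by positivity)]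
        congr 1
        field_simp
      rw [hlog]
      simp only [add_zero, mul_zero, Real.log_one]
      ring
    · intro y hy
      obtain ⟨h1, h2⟩ := hpos y hy
      have d1 : HasDerivAt (fun y : ℝ => Real.log (1 + y)) (1 / (1 + y)) y :=
        ((hasDerivAt_id y).const_add 1).log h1.ne'
      have d2 : HasDerivAt (fun y : ℝ => Real.log (a2 * Ω1 + ξ * y))
          (ξ * 1 / (a2 * Ω1 + ξ * y)) y :=
        (((hasDerivAt_id y).const_mul ξ).const_add (a2 * Ω1)).log h2.ne'
      refine ((d1.const_mul _).sub (d2.const_mul _)).congr_deriv ?_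
      have e1 := h1.ne'
      have e2 := h2.ne'
      have e3 : a2 = 1 - a1 := by linarith
      obtain ⟨D, hD⟩ : ∃ D, D = a2 * Ω1 + ξ * y := ⟨_, rfl⟩
      obtain ⟨d, hdd⟩ : ∃ d, d = a2 * Ω1 - ξ := ⟨_, rfl⟩
      rw [← hD] at e2 ⊢
      rw [← hdd] at hd ⊢
      field_simp
      rw [hD, hdd, e3]
      ring
    · apply ContinuousOn.intervalIntegrable
      refine ContinuousOn.mul (ContinuousOn.div (by fun_prop) (by fun_prop) ?_)
        (ContinuousOn.div (by fun_prop) (by fun_prop) ?_)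
      · exact fun y hy => (hpos y hy).1.ne'
      · exact fun y hy => (hpos y hy).2.ne'
  · exact Tendsto.const_div_atTop (Real.tendsto_logb_atTop (by norm_num)) _
end

section
/- Let Ω1 > 0, a1 ∈ (0,1), and for ρ > 0 define R(ρ) = −( exp(1/(a1·ρ·Ω1)) / (2 ln 2) ) · Ei(−1/(a1·ρ·Ω1)) (the half-duplex ergodic rate of the near user). Then lim_{ρ→∞} R(ρ)/log₂ ρ = 1/2, i.e. the high-SNR slope of the near user in half-duplex NOMA equals 1/2. -/
open MeasureTheory Filter Real

lemma Ei_aux_bound : ∃ K : ℝ, ∀ x : ℝ, 0 < x → x < 1 →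
    |(-Ei (-x)) + Real.log x| ≤ K := by
  have hint : ∀ x : ℝ, 0 < x →
      IntegrableOn (fun t : ℝ => Real.exp (-t) / t) (Set.Ioi x) := by
    intro x hx
    have h1 : IntegrableOn (fun t : ℝ => x⁻¹ * Real.exp (-t)) (Set.Ioi x) :=
      (integrableOn_exp_neg_Ioi x).const_mul _
    refine Integrable.mono' h1 ?_ ?_
    · exact (Measurable.aestronglyMeasurable (by fun_prop))
    · refine (ae_restrict_iff' measurableSet_Ioi).2 (Eventually.of_forall ?_)
      intro t ht
      have ht' : x < t := ht
      have ht0 : 0 < t := hx.trans ht'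
      rw [Real.norm_of_nonneg (by positivity), div_eq_mul_inv, mul_comm]
      gcongr
  refine ⟨1 + |∫ t in Set.Ioi (1:ℝ), Real.exp (-t) / t|, ?_⟩
  intro x hx hx1
  have hsplit : (∫ t in x..1, Real.exp (-t) / t) + (∫ t in Set.Ioi (1:ℝ), Real.exp (-t) / t)
      = ∫ t in Set.Ioi x, Real.exp (-t) / t :=
    intervalIntegral.integral_interval_add_Ioi (hint x hx) (hint 1 one_pos)
  have hE : -Ei (-x) = ∫ t in Set.Ioi x, Real.exp (-t) / t := by simp [Ei]
  have hne : ∀ t ∈ Set.uIcc x 1, t ≠ 0 := by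
    intro t ht
    rw [Set.uIcc_of_le hx1.le] at ht
    exact (hx.trans_le ht.1).ne'
  have hi1 : IntervalIntegrable (fun t : ℝ => Real.exp (-t) / t) volume x 1 := by
    apply ContinuousOn.intervalIntegrable
    exact ContinuousOn.div (by fun_prop) (by fun_prop) hne
  have hi2 : IntervalIntegrable (fun t : ℝ => t⁻¹) volume x 1 := by
    apply ContinuousOn.intervalIntegrable
    exact ContinuousOn.inv₀ (by fun_prop) hne
  have hlog : ∫ t in x..1, t⁻¹ = - Real.log x := by
    rw [integral_inv_of_pos hx one_pos]
    simp
  have hup : (∫ t in x..1, Real.exp (-t) / t) ≤ ∫ t in x..1, t⁻¹ := by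
    apply intervalIntegral.integral_mono_on hx1.le hi1 hi2
    intro t ht
    have ht0 : 0 < t := hx.trans_le ht.1
    rw [div_eq_mul_inv]
    have : Real.exp (-t) ≤ 1 := Real.exp_le_one_iff.2 (by linarith)
    exact mul_le_of_le_one_left (by positivity) this
  have hlow : (∫ t in x..1, (t⁻¹ - 1)) ≤ ∫ t in x..1, Real.exp (-t) / t := by
    apply intervalIntegral.integral_mono_on hx1.le (hi2.sub (by simp)) hi1
    intro t ht
    have ht0 : 0 < t := hx.trans_le ht.1
    rw [le_div_iff₀ ht0, sub_mul, inv_mul_cancel₀ ht0.ne']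
    linarith [Real.add_one_le_exp (-t)]
  rw [intervalIntegral.integral_sub hi2 (by simp), hlog] at hlow
  simp only [intervalIntegral.integral_const, smul_eq_mul, mul_one] at hlow
  rw [hlog] at hup
  rw [hE, ← hsplit]
  have h1 := neg_abs_le (∫ t in Set.Ioi (1:ℝ), Real.exp (-t) / t)
  have h2 := le_abs_self (∫ t in Set.Ioi (1:ℝ), Real.exp (-t) / t)
  rw [abs_le]
  constructor <;> linarith

/-- **High-SNR slope of the HD near user equals `1/2`.**
For the half-duplex ergodic rate `R(ρ) = −(exp(1/(a1 ρ Ω1))/(2 ln 2))·Ei(−1/(a1 ρ Ω1))`,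
one has `R(ρ)/log₂ ρ → 1/2` as `ρ → ∞`. -/
theorem hd_near_user_high_snr_slope
    (Ω1 : ℝ) (hΩ1 : 0 < Ω1) (a1 : ℝ) (ha1 : 0 < a1) (ha1' : a1 < 1)
    (R : ℝ → ℝ)
    (hR : ∀ ρ : ℝ, 0 < ρ →
      R ρ = -(Real.exp (1 / (a1 * ρ * Ω1)) / (2 * Real.log 2)) *
          Ei (-(1 / (a1 * ρ * Ω1)))) :
    Tendsto (fun ρ : ℝ => R ρ / Real.logb 2 ρ) atTop (nhds (1 / 2)) := by
  obtain ⟨K, hK⟩ := Ei_aux_bound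
  have hc : 0 < a1 * Ω1 := mul_pos ha1 hΩ1
  have hx0 : Tendsto (fun ρ : ℝ => 1 / (a1 * ρ * Ω1)) atTop (nhds 0) := by
    have h : Tendsto (fun ρ : ℝ => (a1 * Ω1) * ρ) atTop atTop :=
      tendsto_id.const_mul_atTop hc
    refine h.inv_tendsto_atTop.congr ?_
    intro ρ
    simp only [Pi.inv_apply, one_div]
    congr 1
    ring
  have hexp : Tendsto (fun ρ : ℝ => Real.exp (1 / (a1 * ρ * Ω1))) atTop (nhds 1) := by
    have h := (Real.continuous_exp.tendsto 0).comp hx0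
    rw [Real.exp_zero] at h
    exact h
  have hinv : Tendsto (fun ρ : ℝ => (Real.log ρ)⁻¹) atTop (nhds 0) :=
    Real.tendsto_log_atTop.inv_tendsto_atTop
  have hdiff : Tendsto (fun ρ : ℝ => (Real.log ρ)⁻¹ *
      (-Ei (-(1 / (a1 * ρ * Ω1))) - Real.log ρ)) atTop (nhds 0) := by
    have hb : Tendsto (fun ρ : ℝ => |(Real.log ρ)⁻¹| * (K + |Real.log (a1 * Ω1)|))
        atTop (nhds 0) := by
      simpa using hinv.abs.mul_const (K + |Real.log (a1 * Ω1)|)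
    refine squeeze_zero_norm' ?_ hb
    filter_upwards [eventually_gt_atTop 0, hx0.eventually_lt_const one_pos] with ρ hρ h1
    have hpos : 0 < 1 / (a1 * ρ * Ω1) := by positivity
    have hk := hK _ hpos h1
    have hl : Real.log (1 / (a1 * ρ * Ω1)) = -(Real.log (a1 * Ω1) + Real.log ρ) := by
      rw [← Real.log_mul hc.ne' hρ.ne', one_div, Real.log_inv]
      congr 2
      ring
    rw [hl] at hk
    rw [Real.norm_eq_abs, abs_mul]
    gcongr
    have e : -Ei (-(1 / (a1 * ρ * Ω1))) - Real.log ρ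
        = (-Ei (-(1 / (a1 * ρ * Ω1))) + -(Real.log (a1 * Ω1) + Real.log ρ))
          + Real.log (a1 * Ω1) := by ring
    rw [e]
    exact (abs_add_le _ _).trans (by gcongr)
  have hfin := (hexp.div_const 2).mul (hdiff.add_const 1)
  rw [zero_add, mul_one] at hfin
  refine hfin.congr' ?_
  filter_upwards [eventually_gt_atTop 1] with ρ hρ
  have hl : Real.log ρ ≠ 0 := (Real.log_pos hρ).ne'
  have hl2 : Real.log 2 ≠ 0 := (Real.log_pos one_lt_two).ne'
  rw [hR ρ (by linarith), Real.logb]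
  generalize Ei (-(1 / (a1 * ρ * Ω1))) = y
  generalize Real.exp (1 / (a1 * ρ * Ω1)) = z
  field_simp
  ring
end

section
/- Let Ω1, Ω_LI > 0 with Ω_LI ≠ a1·Ω1, fix a1 ∈ (0,1), and for ρ > 0 define R(ρ) = ( a1·Ω1 / (ln 2 · (Ω_LI − a1·Ω1)) ) · [ exp(1/(a1·ρ·Ω1))·Ei(−1/(a1·ρ·Ω1)) − exp(1/(ρ·Ω_LI))·Ei(−1/(ρ·Ω_LI)) ] (the full-duplex ergodic rate of the near user). Then lim_{ρ→∞} R(ρ) = ( a1·Ω1 / (ln 2 · (Ω_LI − a1·Ω1)) ) · ln( Ω_LI/(a1·Ω1) ); in particular R(ρ) converges to a finite rate ceiling and lim_{ρ→∞} R(ρ)/log₂ ρ = 0, i.e. the high-SNR slope of the near user in full-duplex NOMA equals 0. -/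
open MeasureTheory Filter Real

lemma Ei_asymp : ∃ C : ℝ, Tendsto (fun x : ℝ => Real.exp x * Ei (-x) - Real.log x)
    (nhdsWithin 0 (Set.Ioi 0)) (nhds C) := by
  set g : ℝ → ℝ := dslope (fun t : ℝ => Real.exp (-t)) 0 with hg
  have hgc : Continuous g := by
    rw [← continuousOn_univ, hg, continuousOn_dslope Filter.univ_mem]
    refine ⟨by fun_prop, by fun_prop⟩
  have hgv : ∀ t : ℝ, t ≠ 0 → g t = Real.exp (-t) / t - 1 / t := by
    intro t ht
    rw [hg, dslope_of_ne _ ht, slope_def_field]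
    simp
    ring
  set k : ℝ → ℝ := dslope Real.exp 0 with hk
  have hkc : Continuous k := by
    rw [← continuousOn_univ, hk, continuousOn_dslope Filter.univ_mem]
    refine ⟨by fun_prop, by fun_prop⟩
  have hkv : ∀ t : ℝ, t ≠ 0 → Real.exp t - 1 = k t * t := by
    intro t ht
    rw [hk, dslope_of_ne _ ht, slope_def_field]
    simp
    field_simp
  have hint : ∀ x : ℝ, 0 < x → IntegrableOn (fun t : ℝ => Real.exp (-t) / t) (Set.Ioi x) := by
    intro x hx
    refine Integrable.mono' ((integrableOn_exp_neg_Ioi x).div_const x)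
      (Measurable.aestronglyMeasurable (by fun_prop)) ?_
    refine (ae_restrict_iff' measurableSet_Ioi).2 (ae_of_all _ fun t ht => ?_)
    have ht' : x < t := ht
    have h0 : 0 < t := hx.trans ht'
    rw [Real.norm_eq_abs, abs_of_pos (by positivity)]
    gcongr
  have hGc : Continuous (fun x : ℝ => ∫ t in x..1, g t) := by
    have : (fun x : ℝ => ∫ t in x..1, g t) = fun x => - ∫ t in (1:ℝ)..x, g t := by
      funext x; rw [intervalIntegral.integral_symm]
    rw [this]
    exact (intervalIntegral.continuous_primitive
      (fun a b => hgc.intervalIntegrable a b) 1).neg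
  have hF : ∀ x : ℝ, 0 < x → Ei (-x) = Ei (-1) + Real.log x - ∫ t in x..1, g t := by
    intro x hx
    have hmem : ∀ t ∈ Set.uIcc x 1, t ≠ 0 := by
      intro t ht h0
      rw [Set.mem_uIcc] at ht
      rcases ht with h | h <;> linarith
    have h1 := intervalIntegral.integral_interval_add_Ioi' (μ := volume)
      (f := fun t : ℝ => Real.exp (-t) / t) (a := x) (b := 1)
      (by
        apply ContinuousOn.intervalIntegrable
        exact ContinuousOn.div (by fun_prop) (by fun_prop) hmem)
      (hint 1 one_pos)
    have h2 : ∫ t in x..1, g t = (∫ t in x..1, Real.exp (-t) / t) - ∫ t in x..1, 1 / t := by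
      rw [← intervalIntegral.integral_sub]
      · exact intervalIntegral.integral_congr fun t ht => hgv t (hmem t ht)
      · apply ContinuousOn.intervalIntegrable
        exact ContinuousOn.div (by fun_prop) (by fun_prop) hmem
      · apply ContinuousOn.intervalIntegrable
        exact ContinuousOn.div (by fun_prop) (by fun_prop) hmem
    rw [integral_one_div_of_pos hx one_pos, Real.log_div one_ne_zero hx.ne', Real.log_one] at h2
    simp only [Ei, neg_neg]
    rw [← h1]
    linarith
  refine ⟨Real.exp 0 * (Ei (-1) - ∫ t in (0:ℝ)..1, g t) + k 0 * 0, ?_⟩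
  have hlim : Tendsto (fun x : ℝ => Real.exp x * (Ei (-1) - ∫ t in x..1, g t)
      + k x * (Real.log x * x)) (nhdsWithin 0 (Set.Ioi 0))
      (nhds (Real.exp 0 * (Ei (-1) - ∫ t in (0:ℝ)..1, g t) + k 0 * 0)) := by
    refine Tendsto.add ?_ (Tendsto.mul (hkc.tendsto 0 |>.mono_left nhdsWithin_le_nhds) ?_)
    · exact ((Real.continuous_exp.mul (continuous_const.sub hGc)).tendsto 0).mono_left
        nhdsWithin_le_nhds
    · simpa using tendsto_log_mul_rpow_nhdsGT_zero (r := 1) one_pos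
  refine hlim.congr' ?_
  filter_upwards [self_mem_nhdsWithin] with x hx
  have hx' : 0 < x := hx
  rw [hF x hx']
  linear_combination (-Real.log x) * hkv x hx'.ne'

lemma tendsto_inv_scale (c : ℝ) (hc : 0 < c) :
    Tendsto (fun ρ : ℝ => 1 / (ρ * c)) atTop (nhdsWithin 0 (Set.Ioi 0)) := by
  have := tendsto_inv_atTop_nhdsGT_zero.comp (tendsto_id.atTop_mul_const hc : Tendsto (fun ρ : ℝ => ρ * c) atTop atTop)
  simpa [Function.comp_def, one_div] using this

/-- **FD near-user rate ceiling and zero high-SNR slope.**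
The full-duplex ergodic rate of the near user converges to the finite ceiling
`(a1 Ω1/(ln 2 (Ω_LI − a1 Ω1)))·ln(Ω_LI/(a1 Ω1))` as `ρ → ∞`; in particular
`R(ρ)/log₂ ρ → 0`. -/
theorem fd_near_user_rate_ceiling
    (Ω1 ΩLI : ℝ) (hΩ1 : 0 < Ω1) (hΩLI : 0 < ΩLI)
    (a1 : ℝ) (ha1 : 0 < a1) (ha1' : a1 < 1) (hne : ΩLI ≠ a1 * Ω1)
    (R : ℝ → ℝ)
    (hR : ∀ ρ : ℝ, 0 < ρ →
      R ρ = a1 * Ω1 / (Real.log 2 * (ΩLI - a1 * Ω1)) *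
        (Real.exp (1 / (a1 * ρ * Ω1)) * Ei (-(1 / (a1 * ρ * Ω1)))
          - Real.exp (1 / (ρ * ΩLI)) * Ei (-(1 / (ρ * ΩLI))))) :
    Tendsto R atTop
        (nhds (a1 * Ω1 / (Real.log 2 * (ΩLI - a1 * Ω1)) *
          Real.log (ΩLI / (a1 * Ω1)))) ∧
      Tendsto (fun ρ : ℝ => R ρ / Real.logb 2 ρ) atTop (nhds 0) := by
  have key : Tendsto R atTop
        (nhds (a1 * Ω1 / (Real.log 2 * (ΩLI - a1 * Ω1)) *
          Real.log (ΩLI / (a1 * Ω1)))) := by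
    obtain ⟨C, hC⟩ := Ei_asymp
    have hc : 0 < a1 * Ω1 := by positivity
    have h := (((hC.comp (tendsto_inv_scale _ hc)).sub
      (hC.comp (tendsto_inv_scale _ hΩLI))).add_const
        (Real.log (ΩLI / (a1 * Ω1)))).const_mul (a1 * Ω1 / (Real.log 2 * (ΩLI - a1 * Ω1)))
    rw [sub_self, zero_add] at h
    refine h.congr' ?_
    filter_upwards [eventually_gt_atTop 0] with ρ hρ
    rw [hR ρ hρ, show a1 * ρ * Ω1 = ρ * (a1 * Ω1) by ring]
    simp only [Function.comp]
    congr 1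
    rw [Real.log_div hΩLI.ne' hc.ne', one_div, one_div, Real.log_inv, Real.log_inv,
      Real.log_mul hρ.ne' hc.ne', Real.log_mul hρ.ne' hΩLI.ne']
    ring
  exact ⟨key, key.div_atTop (Real.tendsto_logb_atTop one_lt_two)⟩
end

section
/- Let Ω2 > 0 and let a1, a2 satisfy 0 < a1 < a2 and a1 + a2 = 1. For ρ > 0 define R(ρ) = ( exp(1/(ρ·Ω2)) / (2 ln 2) ) · [ Ei(−1/(ρ·a1·Ω2)) − Ei(−1/(ρ·Ω2)) ] (the high-SNR approximation of the half-duplex ergodic rate of the far user without direct link). Then lim_{ρ→∞} R(ρ) = (1/(2 ln 2)) · ln(1/a1) = (1/2)·log₂(1 + a2/a1); in particular R(ρ) converges to a finite throughput ceiling and lim_{ρ→∞} R(ρ)/log₂ ρ = 0, i.e. the far user's high-SNR slope is 0. -/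
open MeasureTheory Filter Real

lemma ei_integrable (x : ℝ) (hx : 0 < x) :
    IntegrableOn (fun t : ℝ => Real.exp (-t) / t) (Set.Ioi x) := by
  have h : IntegrableOn (fun t : ℝ => x⁻¹ * Real.exp (-t)) (Set.Ioi x) :=
    (integrableOn_exp_neg_Ioi x).const_mul _
  refine Integrable.mono' h ?_ ?_
  · exact (by fun_prop : Measurable fun t : ℝ => Real.exp (-t) / t).aestronglyMeasurable
  · refine (ae_restrict_iff' measurableSet_Ioi).2 (ae_of_all _ fun t ht => ?_)
    have ht' : x < t := ht
    have h0 : 0 < t := hx.trans ht'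
    rw [Real.norm_of_nonneg (by positivity), div_eq_inv_mul]
    gcongr

lemma ei_diff (x y : ℝ) (hx : 0 < x) (hxy : x ≤ y) :
    Ei (-y) - Ei (-x) = ∫ t in x..y, Real.exp (-t) / t := by
  have h := intervalIntegral.integral_Ioi_sub_Ioi (ei_integrable x hx) hxy
  unfold Ei
  simp only [neg_neg]
  linarith

lemma ei_bounds (x y : ℝ) (hx : 0 < x) (hxy : x ≤ y) :
    Real.exp (-y) * Real.log (y / x) ≤ Ei (-y) - Ei (-x) ∧
      Ei (-y) - Ei (-x) ≤ Real.log (y / x) := by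
  rw [ei_diff x y hx hxy, ← integral_inv_of_pos hx (hx.trans_le hxy),
    ← intervalIntegral.integral_const_mul]
  have hne : ∀ t ∈ Set.uIcc x y, t ≠ 0 := by
    intro t ht
    rw [Set.uIcc_of_le hxy] at ht
    exact (hx.trans_le ht.1).ne'
  have i1 : IntervalIntegrable (fun t : ℝ => t⁻¹) volume x y :=
    (continuousOn_id.inv₀ hne).intervalIntegrable
  have i2 : IntervalIntegrable (fun t : ℝ => Real.exp (-t) / t) volume x y :=
    (ContinuousOn.div (by fun_prop) continuousOn_id hne).intervalIntegrable
  constructor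
  · refine intervalIntegral.integral_mono_on hxy (i1.const_mul _) i2 fun t ht => ?_
    have h0 : 0 < t := hx.trans_le ht.1
    have h1 := ht.2
    rw [div_eq_mul_inv]
    gcongr
  · refine intervalIntegral.integral_mono_on hxy i2 i1 fun t ht => ?_
    have h0 : 0 < t := hx.trans_le ht.1
    rw [div_eq_mul_inv]
    have : Real.exp (-t) ≤ 1 := Real.exp_le_one_iff.2 (by linarith)
    have h3 : 0 < t⁻¹ := by positivity
    nlinarith

/-- **HD far-user (no direct link) throughput ceiling and zero high-SNR slope.**
The high-SNR approximation of the half-duplex ergodic rate of the far user converges to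
`(1/(2 ln 2))·ln(1/a1) = (1/2)·log₂(1 + a2/a1)` as `ρ → ∞`; in particular
`R(ρ)/log₂ ρ → 0`. -/
theorem hd_far_user_throughput_ceiling
    (Ω2 : ℝ) (hΩ2 : 0 < Ω2)
    (a1 a2 : ℝ) (ha1 : 0 < a1) (ha12 : a1 < a2) (hsum : a1 + a2 = 1)
    (R : ℝ → ℝ)
    (hR : ∀ ρ : ℝ, 0 < ρ →
      R ρ = Real.exp (1 / (ρ * Ω2)) / (2 * Real.log 2) *
        (Ei (-(1 / (ρ * a1 * Ω2))) - Ei (-(1 / (ρ * Ω2))))) :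
    Tendsto R atTop (nhds (1 / (2 * Real.log 2) * Real.log (1 / a1))) ∧
      1 / (2 * Real.log 2) * Real.log (1 / a1)
        = 1 / 2 * Real.logb 2 (1 + a2 / a1) ∧
      Tendsto (fun ρ : ℝ => R ρ / Real.logb 2 ρ) atTop (nhds 0) := by
  have key : ∀ c : ℝ, 0 < c → Tendsto (fun ρ : ℝ => 1 / (ρ * c)) atTop (nhds 0) := by
    intro c hc
    simp only [one_div]
    exact tendsto_inv_atTop_zero.comp (tendsto_id.atTop_mul_const hc)
  have k1 := key Ω2 hΩ2
  have k2 : Tendsto (fun ρ : ℝ => 1 / (ρ * a1 * Ω2)) atTop (nhds 0) := by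
    simpa only [mul_assoc] using key (a1 * Ω2) (by positivity)
  have hb : ∀ ρ : ℝ, 0 < ρ →
      Real.exp (-(1 / (ρ * a1 * Ω2))) * Real.log (1 / a1) ≤
        Ei (-(1 / (ρ * a1 * Ω2))) - Ei (-(1 / (ρ * Ω2))) ∧
      Ei (-(1 / (ρ * a1 * Ω2))) - Ei (-(1 / (ρ * Ω2))) ≤ Real.log (1 / a1) := by
    intro ρ hρ
    have h := ei_bounds (1 / (ρ * Ω2)) (1 / (ρ * a1 * Ω2)) (by positivity) (by
      apply one_div_le_one_div_of_le (by positivity)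
      have : a1 ≤ 1 := by linarith
      have h2 : 0 < ρ * Ω2 := by positivity
      nlinarith)
    have e : 1 / (ρ * a1 * Ω2) / (1 / (ρ * Ω2)) = 1 / a1 := by field_simp
    rwa [e] at h
  have hD : Tendsto (fun ρ : ℝ => Ei (-(1 / (ρ * a1 * Ω2))) - Ei (-(1 / (ρ * Ω2)))) atTop
      (nhds (Real.log (1 / a1))) := by
    refine tendsto_of_tendsto_of_tendsto_of_le_of_le'
      (g := fun ρ => Real.exp (-(1 / (ρ * a1 * Ω2))) * Real.log (1 / a1)) ?_
      (tendsto_const_nhds (x := Real.log (1 / a1))) ?_ ?_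
    · have := ((Real.continuous_exp.tendsto _).comp k2.neg).mul_const (Real.log (1 / a1))
      simpa using this
    · filter_upwards [eventually_gt_atTop 0] with ρ hρ using (hb ρ hρ).1
    · filter_upwards [eventually_gt_atTop 0] with ρ hρ using (hb ρ hρ).2
  have hlim : Tendsto R atTop (nhds (1 / (2 * Real.log 2) * Real.log (1 / a1))) := by
    have h1 := (((Real.continuous_exp.tendsto _).comp k1).div_const (2 * Real.log 2)).mul hD
    rw [Real.exp_zero] at h1
    refine h1.congr' ?_
    filter_upwards [eventually_gt_atTop 0] with ρ hρ
    rw [hR ρ hρ]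
    rfl
  refine ⟨hlim, ?_, ?_⟩
  · have e : 1 + a2 / a1 = 1 / a1 := by
      field_simp
      linarith
    rw [e, Real.logb]
    have : Real.log 2 ≠ 0 := (Real.log_pos (by norm_num)).ne'
    field_simp
  · exact hlim.div_atTop (Real.tendsto_logb_atTop (by norm_num))
end
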